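/- Let 𝒮 be the 8-dimensional complex Lie superalgebra of the classical operators of Kähler geometry: even basis Δ, L, H, Λ and odd basis d, d*, d_c, d_c*, with the only nonzero brackets [L,Λ] = H, [H,L] = 2L, [H,Λ] = −2Λ, [d,d*] = Δ, [d_c,d_c*] = Δ (odd brackets are anticommutators), [H,d] = d, [H,d*] = −d*, [H,d_c] = d_c, [H,d_c*] = −d_c*, [L,d*] = −d_c, [L,d_c*] = d, [Λ,d] = d_c*, [Λ,d_c] = −d* (Δ is central). Then the degree-zero part S'(2,0)_{deg=0} of S'(2,0) with respect to the ℤ-grading deg is spanned by ℒ_0, E_{−1}, H_0, F_1, 𝔥_0, 𝔭_0, 𝔵_{−1}, 𝔶_1, and the linear map ψ : 𝒮 → S'(2,0)_{deg=0} defined by ψ(Δ) = −ℒ_0 + (1/2)H_0, ψ(L) = E_{−1}, ψ(H) = H_0, ψ(Λ) = F_1, ψ(d) = 𝔥_0, ψ(d*) = −𝔭_0, ψ(d_c) = 𝔵_{−1}, ψ(d_c*) = 𝔶_1 is an isomorphism of Lie superalgebras. -/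

import Mathlib

noncomputable section

/-- The Laurent polynomial ring `ℂ[t,t⁻¹]`, as the space of finitely supported
functions `ℤ →₀ ℂ` (the function `f` represents `Σ_n f(n)tⁿ`). -/
abbrev Lau : Type := ℤ →₀ ℂ

/-- The supercommutative superalgebra `A = ℂ[t,t⁻¹] ⊗ Λ(θ₁,θ₂)`, an element
`(a,b,c,d)` representing `a + bθ₁ + cθ₂ + dθ₁θ₂`. -/
abbrev GA : Type := Lau × Lau × Lau × Lau

/-- The derivative `∂_t` on `ℂ[t,t⁻¹]`: `tⁿ ↦ n tⁿ⁻¹`. -/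
def tder : Lau →ₗ[ℂ] Lau :=
  Finsupp.lsum ℂ fun n => (n : ℂ) • Finsupp.lsingle (n - 1)

/-- Multiplication by `t^k` on `ℂ[t,t⁻¹]`. -/
def tshift (k : ℤ) : Lau →ₗ[ℂ] Lau := Finsupp.lmapDomain ℂ ℂ (· + k)

/-- Components of `A`. -/
def pr0 : GA →ₗ[ℂ] Lau := LinearMap.fst ℂ Lau (Lau × Lau × Lau)
def pr1 : GA →ₗ[ℂ] Lau :=
  (LinearMap.fst ℂ Lau (Lau × Lau)).comp (LinearMap.snd ℂ Lau (Lau × Lau × Lau))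
def pr2 : GA →ₗ[ℂ] Lau :=
  ((LinearMap.fst ℂ Lau Lau).comp (LinearMap.snd ℂ Lau (Lau × Lau))).comp
    (LinearMap.snd ℂ Lau (Lau × Lau × Lau))
def pr3 : GA →ₗ[ℂ] Lau :=
  ((LinearMap.snd ℂ Lau Lau).comp (LinearMap.snd ℂ Lau (Lau × Lau))).comp
    (LinearMap.snd ℂ Lau (Lau × Lau × Lau))

/-- Build an endomorphism of `A` from its four components. -/
def mk4 (f0 f1 f2 f3 : GA →ₗ[ℂ] Lau) : Module.End ℂ GA :=
  f0.prod (f1.prod (f2.prod f3))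

/-- The even derivation `∂_t` of `A`. -/
def Dt : Module.End ℂ GA :=
  mk4 (tder.comp pr0) (tder.comp pr1) (tder.comp pr2) (tder.comp pr3)

/-- The odd (left) derivation `∂₁ = ∂/∂θ₁` of `A`. -/
def Dθ1 : Module.End ℂ GA := mk4 pr1 0 pr3 0

/-- The odd (left) derivation `∂₂ = ∂/∂θ₂` of `A`. -/
def Dθ2 : Module.End ℂ GA := mk4 pr2 (-pr3) 0 0

/-- Multiplication by `θ₁` on `A`. -/
def Mθ1 : Module.End ℂ GA := mk4 0 pr0 0 pr2

/-- Multiplication by `θ₂` on `A`. -/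
def Mθ2 : Module.End ℂ GA := mk4 0 0 pr0 (-pr1)

/-- Multiplication by `t^k` on `A`. -/
def Mt (k : ℤ) : Module.End ℂ GA :=
  mk4 ((tshift k).comp pr0) ((tshift k).comp pr1) ((tshift k).comp pr2) ((tshift k).comp pr3)

/-- `ℒ_n^α = −tⁿ(t∂_t + (1/2)(n+α+1)(θ₁∂₁ + θ₂∂₂))`. -/
def Lop (α : ℂ) (n : ℤ) : Module.End ℂ GA :=
  -(Mt (n + 1) * Dt + (((n : ℂ) + α + 1) / 2) • (Mt n * (Mθ1 * Dθ1 + Mθ2 * Dθ2)))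

/-- `E_n = tⁿθ₂∂₁`. -/
def Eop (n : ℤ) : Module.End ℂ GA := Mt n * Mθ2 * Dθ1

/-- `H_n = tⁿ(θ₂∂₂ − θ₁∂₁)`. -/
def Hop (n : ℤ) : Module.End ℂ GA := Mt n * Mθ2 * Dθ2 - Mt n * Mθ1 * Dθ1

/-- `F_n = tⁿθ₁∂₂`. -/
def Fop (n : ℤ) : Module.End ℂ GA := Mt n * Mθ1 * Dθ2

/-- `𝔥_n^α = tⁿθ₂∂_t − (n+α)tⁿ⁻¹θ₁θ₂∂₁`. -/
def hop (α : ℂ) (n : ℤ) : Module.End ℂ GA :=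
  Mt n * Mθ2 * Dt - ((n : ℂ) + α) • (Mt (n - 1) * Mθ1 * Mθ2 * Dθ1)

/-- `𝔭_n = −tⁿ⁺¹∂₂`. -/
def pop (n : ℤ) : Module.End ℂ GA := -(Mt (n + 1) * Dθ2)

/-- `𝔵_n = tⁿ⁺¹∂₁`. -/
def xop (n : ℤ) : Module.End ℂ GA := Mt (n + 1) * Dθ1

/-- `𝔶_n^α = tⁿθ₁∂_t + (n+α)tⁿ⁻¹θ₁θ₂∂₂`. -/
def yop (α : ℂ) (n : ℤ) : Module.End ℂ GA :=
  Mt n * Mθ1 * Dt + ((n : ℂ) + α) • (Mt (n - 1) * Mθ1 * Mθ2 * Dθ2)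

/-- The parity involution of `A = ℂ[t,t⁻¹] ⊗ Λ(θ₁,θ₂)` (identity on the even part,
`−1` on the odd part). -/
def sigmaGA : Module.End ℂ GA := mk4 pr0 (-pr1) (-pr2) pr3

/-- The supercommutator on `End(A)`, extended bilinearly from homogeneous elements
(for homogeneous `x, y` it equals `x∘y − (−1)^{p(x)p(y)} y∘x`, parity being measured
by conjugation by the parity involution). -/
def sbr (x y : Module.End ℂ GA) : Module.End ℂ GA :=
  x * y - ((1 : ℂ) / 2) • ((y + sigmaGA * y * sigmaGA) * x)
    - ((1 : ℂ) / 2) • ((y - sigmaGA * y * sigmaGA) * (sigmaGA * x * sigmaGA))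

/-- The generating set of the superalgebra `S'(2,α) ⊆ W(2)`: all the basis
elements `ℒ_n^α, E_n, H_n, F_n, 𝔥_n^α, 𝔭_n, 𝔵_n, 𝔶_n^α`. -/
def s2Gen (α : ℂ) : Set (Module.End ℂ GA) :=
  {e | ∃ n : ℤ, e = Lop α n ∨ e = Eop n ∨ e = Hop n ∨ e = Fop n ∨
    e = hop α n ∨ e = pop n ∨ e = xop n ∨ e = yop α n}

/-- The superalgebra `S'(2,α)`, as the span of its basis inside `W(2) ⊆ End(A)`. -/
def s2Span (α : ℂ) : Submodule ℂ (Module.End ℂ GA) := Submodule.span ℂ (s2Gen α)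

/-- `D` is an even derivation of `S'(2,α)`: it preserves parity and satisfies the
Leibniz rule `D[x,y] = [Dx,y] + [x,Dy]`. -/
def IsEvenDer (α : ℂ) (D : ↥(s2Span α) →ₗ[ℂ] ↥(s2Span α)) : Prop :=
  (∀ x z : ↥(s2Span α), (z : Module.End ℂ GA) = sigmaGA * (x : Module.End ℂ GA) * sigmaGA →
    ((D z : Module.End ℂ GA)) = sigmaGA * (D x : Module.End ℂ GA) * sigmaGA) ∧
  (∀ x y z : ↥(s2Span α),
    (z : Module.End ℂ GA) = sbr (x : Module.End ℂ GA) (y : Module.End ℂ GA) →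
    ((D z : Module.End ℂ GA)) = sbr (D x : Module.End ℂ GA) (y : Module.End ℂ GA)
      + sbr (x : Module.End ℂ GA) (D y : Module.End ℂ GA))

/-- `D` is an odd derivation of `S'(2,α)`: it reverses parity and satisfies the
Leibniz rule `D[x,y] = [Dx,y] + (−1)^{p(x)}[x,Dy]`. -/
def IsOddDer (α : ℂ) (D : ↥(s2Span α) →ₗ[ℂ] ↥(s2Span α)) : Prop :=
  (∀ x z : ↥(s2Span α), (z : Module.End ℂ GA) = sigmaGA * (x : Module.End ℂ GA) * sigmaGA →
    ((D z : Module.End ℂ GA)) = -(sigmaGA * (D x : Module.End ℂ GA) * sigmaGA)) ∧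
  (∀ x y z : ↥(s2Span α),
    (z : Module.End ℂ GA) = sbr (x : Module.End ℂ GA) (y : Module.End ℂ GA) →
    ((D z : Module.End ℂ GA)) = sbr (D x : Module.End ℂ GA) (y : Module.End ℂ GA)
      + sbr (sigmaGA * (x : Module.End ℂ GA) * sigmaGA) (D y : Module.End ℂ GA))

/-- `D` is a superderivation of `S'(2,α)`: a sum of an even and an odd derivation. -/
def IsSuperDer (α : ℂ) (D : ↥(s2Span α) →ₗ[ℂ] ↥(s2Span α)) : Prop :=
  ∃ De Do, D = De + Do ∧ IsEvenDer α De ∧ IsOddDer α Do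

/-- `D` is an inner derivation of `S'(2,α)`: `D = ad s` for some `s ∈ S'(2,α)`. -/
def IsInnerDer (α : ℂ) (D : ↥(s2Span α) →ₗ[ℂ] ↥(s2Span α)) : Prop :=
  ∃ s : ↥(s2Span α), ∀ x : ↥(s2Span α),
    ((D x : Module.End ℂ GA)) = sbr (s : Module.End ℂ GA) (x : Module.End ℂ GA)

/-- Basis symbols of the Lie superalgebra `𝒮` of the classical operators of Kähler
geometry: `Δ, L, H, Λ` (even) and `d, d*, d_c, d_c*` (odd). -/
inductive SB : Type
  | del | lef | car | lam | dif | adj | difc | adjc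
deriving DecidableEq

open SB in
/-- The structure constants of `𝒮`: the only nonzero brackets are
`[L,Λ] = H`, `[H,L] = 2L`, `[H,Λ] = −2Λ`, `[d,d*] = Δ`, `[d_c,d_c*] = Δ`,
`[H,d] = d`, `[H,d*] = −d*`, `[H,d_c] = d_c`, `[H,d_c*] = −d_c*`,
`[L,d*] = −d_c`, `[L,d_c*] = d`, `[Λ,d] = d_c*`, `[Λ,d_c] = −d*`
(odd-odd brackets are anticommutators, `Δ` is central). -/
def brS : SB → SB → (SB →₀ ℂ)
  | lef, lam => Finsupp.single car 1
  | lam, lef => -Finsupp.single car 1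
  | car, lef => (2 : ℂ) • Finsupp.single lef 1
  | lef, car => -((2 : ℂ) • Finsupp.single lef 1)
  | car, lam => -((2 : ℂ) • Finsupp.single lam 1)
  | lam, car => (2 : ℂ) • Finsupp.single lam 1
  | dif, adj => Finsupp.single del 1
  | adj, dif => Finsupp.single del 1
  | difc, adjc => Finsupp.single del 1
  | adjc, difc => Finsupp.single del 1
  | car, dif => Finsupp.single dif 1
  | dif, car => -Finsupp.single dif 1
  | car, adj => -Finsupp.single adj 1
  | adj, car => Finsupp.single adj 1
  | car, difc => Finsupp.single difc 1
  | difc, car => -Finsupp.single difc 1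
  | car, adjc => -Finsupp.single adjc 1
  | adjc, car => Finsupp.single adjc 1
  | lef, adj => -Finsupp.single difc 1
  | adj, lef => Finsupp.single difc 1
  | lef, adjc => Finsupp.single dif 1
  | adjc, lef => -Finsupp.single dif 1
  | lam, dif => Finsupp.single adjc 1
  | dif, lam => -Finsupp.single adjc 1
  | lam, difc => -Finsupp.single adj 1
  | difc, lam => Finsupp.single adj 1
  | _, _ => 0

/-- The bracket of `𝒮`, extended bilinearly from the structure constants. -/
def BrS (x y : SB →₀ ℂ) : SB →₀ ℂ :=
  x.sum fun b cb => y.sum fun b' cb' => (cb * cb') • brS b b'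

open SB in
/-- The map `ψ` on basis symbols: `ψ(Δ) = −ℒ₀ + (1/2)H₀`, `ψ(L) = E₋₁`, `ψ(H) = H₀`,
`ψ(Λ) = F₁`, `ψ(d) = 𝔥₀`, `ψ(d*) = −𝔭₀`, `ψ(d_c) = 𝔵₋₁`, `ψ(d_c*) = 𝔶₁`. -/
def psiS0 : SB → Module.End ℂ GA
  | del => -Lop 0 0 + ((1 : ℂ) / 2) • Hop 0
  | lef => Eop (-1)
  | car => Hop 0
  | lam => Fop 1
  | dif => hop 0 0
  | adj => -pop 0
  | difc => xop (-1)
  | adjc => yop 0 1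

/-- The linear extension `ψ : 𝒮 → S'(2,0)_{deg=0} ⊆ End(A)`. -/
def PsiS (x : SB →₀ ℂ) : Module.End ℂ GA := x.sum fun b c => c • psiS0 b


/-- The degree-zero element `𝐋₀ = −ℒ₀ + (1/2)H₀` of `S'(2,0)`. -/
def L0c : Module.End ℂ GA := -Lop 0 0 + ((1 : ℂ) / 2) • Hop 0


set_option linter.all false
set_option linter.unusedSimpArgs false
set_option linter.unnecessarySeqFocus false
set_option linter.flexible false

theorem tder_ap (f : Lau) (n : ℤ) : tder f n = ((n : ℂ) + 1) * f (n + 1) := by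
  induction f using Finsupp.induction_linear with
  | zero => simp
  | add f g hf hg => rw [map_add, Finsupp.add_apply, hf, hg, Finsupp.add_apply]; ring
  | single a b =>
    simp only [tder, Finsupp.lsum_single, LinearMap.smul_apply, Finsupp.lsingle_apply,
      Finsupp.smul_apply, Finsupp.single_apply, smul_eq_mul]
    by_cases h : a = n + 1
    · subst h; simp
    · rw [if_neg (by omega), if_neg h]; simp

theorem tshift_ap (k : ℤ) (f : Lau) (n : ℤ) : tshift k f n = f (n - k) := by
  have := Finsupp.mapDomain_apply (f := fun x : ℤ => x + k) (add_left_injective k) f (n - k)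
  simpa [tshift] using this

theorem pr0_ap (x : GA) : pr0 x = x.1 := rfl
theorem pr1_ap (x : GA) : pr1 x = x.2.1 := rfl
theorem pr2_ap (x : GA) : pr2 x = x.2.2.1 := rfl
theorem pr3_ap (x : GA) : pr3 x = x.2.2.2 := rfl
theorem mk4_ap (f0 f1 f2 f3 : GA →ₗ[ℂ] Lau) (x : GA) :
    mk4 f0 f1 f2 f3 x = (f0 x, f1 x, f2 x, f3 x) := rfl

theorem GA_ext {f g : Module.End ℂ GA} (h0 : ∀ x n, (f x).1 n = (g x).1 n)
    (h1 : ∀ x n, (f x).2.1 n = (g x).2.1 n) (h2 : ∀ x n, (f x).2.2.1 n = (g x).2.2.1 n)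
    (h3 : ∀ x n, (f x).2.2.2 n = (g x).2.2.2 n) : f = g := by
  refine LinearMap.ext fun x => ?_
  refine Prod.ext (Finsupp.ext (h0 x)) (Prod.ext (Finsupp.ext (h1 x))
    (Prod.ext (Finsupp.ext (h2 x)) (Finsupp.ext (h3 x))))

theorem sbr_ap (x y : Module.End ℂ GA) (v : GA) : sbr x y v =
    x (y v) - ((1 : ℂ) / 2) • (y (x v) + sigmaGA (y (sigmaGA (x v))))
    - ((1 : ℂ) / 2) • (y (sigmaGA (x (sigmaGA v)))
      - sigmaGA (y (sigmaGA (sigmaGA (x (sigmaGA v)))))) := rfl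

def sbrL : Module.End ℂ GA →ₗ[ℂ] Module.End ℂ GA →ₗ[ℂ] Module.End ℂ GA :=
  LinearMap.mk₂ ℂ sbr
    (fun a b c => by
      refine LinearMap.ext fun v => ?_
      simp only [sbr_ap, LinearMap.add_apply, map_add]; module)
    (fun k a b => by
      refine LinearMap.ext fun v => ?_
      simp only [sbr_ap, LinearMap.smul_apply, map_smul]; module)
    (fun a b c => by
      refine LinearMap.ext fun v => ?_
      simp only [sbr_ap, LinearMap.add_apply, map_add]; module)
    (fun k a b => by
      refine LinearMap.ext fun v => ?_
      simp only [sbr_ap, LinearMap.smul_apply, map_smul]; module)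

theorem sbrL_ap (a b : Module.End ℂ GA) : sbrL a b = sbr a b := rfl

theorem L0c_eq : L0c = Mt 1 * Dt + Mθ2 * Dθ2 := by
  apply GA_ext <;> intro x n <;>
  simp [L0c, Lop, Hop, Mt, Dt, Mθ1, Mθ2, Dθ1, Dθ2, mk4_ap, pr0_ap, pr1_ap, pr2_ap, pr3_ap,
    tder_ap, tshift_ap] <;> ring

theorem eig_L (m : ℤ) : sbr L0c (Lop 0 m) = (m : ℂ) • Lop 0 m := by
  rw [L0c_eq]
  apply GA_ext <;> intro x n <;>
  simp [Lop, Eop, Hop, Fop, hop, pop, xop, yop, sbr, sigmaGA, Mt, Dt, Mθ1, Mθ2, Dθ1, Dθ2,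
    mk4_ap, pr0_ap, pr1_ap, pr2_ap, pr3_ap, tder_ap, tshift_ap] <;> ring_nf
theorem eig_E (m : ℤ) : sbr L0c (Eop m) = ((m + 1 : ℤ) : ℂ) • Eop m := by
  rw [L0c_eq]
  apply GA_ext <;> intro x n <;>
  simp [Lop, Eop, Hop, Fop, hop, pop, xop, yop, sbr, sigmaGA, Mt, Dt, Mθ1, Mθ2, Dθ1, Dθ2,
    mk4_ap, pr0_ap, pr1_ap, pr2_ap, pr3_ap, tder_ap, tshift_ap] <;> ring_nf
theorem eig_H (m : ℤ) : sbr L0c (Hop m) = (m : ℂ) • Hop m := by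
  rw [L0c_eq]
  apply GA_ext <;> intro x n <;>
  simp [Lop, Eop, Hop, Fop, hop, pop, xop, yop, sbr, sigmaGA, Mt, Dt, Mθ1, Mθ2, Dθ1, Dθ2,
    mk4_ap, pr0_ap, pr1_ap, pr2_ap, pr3_ap, tder_ap, tshift_ap] <;> ring_nf
theorem eig_F (m : ℤ) : sbr L0c (Fop m) = ((m - 1 : ℤ) : ℂ) • Fop m := by
  rw [L0c_eq]
  apply GA_ext <;> intro x n <;>
  simp [Lop, Eop, Hop, Fop, hop, pop, xop, yop, sbr, sigmaGA, Mt, Dt, Mθ1, Mθ2, Dθ1, Dθ2,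
    mk4_ap, pr0_ap, pr1_ap, pr2_ap, pr3_ap, tder_ap, tshift_ap] <;> ring_nf
theorem eig_h (m : ℤ) : sbr L0c (hop 0 m) = (m : ℂ) • hop 0 m := by
  rw [L0c_eq]
  apply GA_ext <;> intro x n <;>
  simp [Lop, Eop, Hop, Fop, hop, pop, xop, yop, sbr, sigmaGA, Mt, Dt, Mθ1, Mθ2, Dθ1, Dθ2,
    mk4_ap, pr0_ap, pr1_ap, pr2_ap, pr3_ap, tder_ap, tshift_ap] <;> ring_nf
theorem eig_p (m : ℤ) : sbr L0c (pop m) = (m : ℂ) • pop m := by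
  rw [L0c_eq]
  apply GA_ext <;> intro x n <;>
  simp [Lop, Eop, Hop, Fop, hop, pop, xop, yop, sbr, sigmaGA, Mt, Dt, Mθ1, Mθ2, Dθ1, Dθ2,
    mk4_ap, pr0_ap, pr1_ap, pr2_ap, pr3_ap, tder_ap, tshift_ap] <;> ring_nf
theorem eig_x (m : ℤ) : sbr L0c (xop m) = ((m + 1 : ℤ) : ℂ) • xop m := by
  rw [L0c_eq]
  apply GA_ext <;> intro x n <;>
  simp [Lop, Eop, Hop, Fop, hop, pop, xop, yop, sbr, sigmaGA, Mt, Dt, Mθ1, Mθ2, Dθ1, Dθ2,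
    mk4_ap, pr0_ap, pr1_ap, pr2_ap, pr3_ap, tder_ap, tshift_ap] <;> ring_nf
theorem eig_y (m : ℤ) : sbr L0c (yop 0 m) = ((m - 1 : ℤ) : ℂ) • yop 0 m := by
  rw [L0c_eq]
  apply GA_ext <;> intro x n <;>
  simp [Lop, Eop, Hop, Fop, hop, pop, xop, yop, sbr, sigmaGA, Mt, Dt, Mθ1, Mθ2, Dθ1, Dθ2,
    mk4_ap, pr0_ap, pr1_ap, pr2_ap, pr3_ap, tder_ap, tshift_ap] <;> ring_nf

def span8 : Submodule ℂ (Module.End ℂ GA) :=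
  Submodule.span ℂ ({Lop 0 0, Eop (-1), Hop 0, Fop 1, hop 0 0, pop 0,
        xop (-1), yop 0 1} : Set (Module.End ℂ GA))

theorem absEig {V : Type*} [AddCommGroup V] [Module ℂ V] (T : V →ₗ[ℂ] V) (G S : Set V)
    (hG : ∀ e ∈ G, ∃ k : ℂ, T e = k • e ∧ (k = 0 → e ∈ Submodule.span ℂ S))
    (hS : ∀ e ∈ S, T e = 0) (x : V) (hx : x ∈ Submodule.span ℂ G) (h0 : T x = 0) :
    x ∈ Submodule.span ℂ S := by
  have hS' : Submodule.span ℂ S ≤ Module.End.eigenspace T 0 := by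
    refine Submodule.span_le.2 fun e he => ?_
    rw [SetLike.mem_coe, Module.End.mem_eigenspace_iff, hS e he, zero_smul]
  have hG' : Submodule.span ℂ G ≤
      Submodule.span ℂ S ⊔ ⨆ (μ : ℂ) (_ : μ ≠ 0), Module.End.eigenspace T μ := by
    refine Submodule.span_le.2 fun e he => ?_
    obtain ⟨k, hk, hk0⟩ := hG e he
    by_cases h : k = 0
    · exact Submodule.mem_sup_left (hk0 h)
    · refine Submodule.mem_sup_right ?_
      refine Submodule.mem_iSup_of_mem k (Submodule.mem_iSup_of_mem h ?_)
      rw [Module.End.mem_eigenspace_iff, hk]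
  obtain ⟨a, ha, b, hb, rfl⟩ := Submodule.mem_sup.1 (hG' hx)
  have hb0 : b ∈ Module.End.eigenspace T 0 := by
    have h1 : a + b ∈ Module.End.eigenspace T 0 := by
      rw [Module.End.mem_eigenspace_iff, zero_smul]; exact h0
    exact (Submodule.add_mem_iff_right _ (hS' ha)).1 h1
  have hd := (Module.End.eigenspaces_iSupIndep T) 0
  have : b = 0 := Submodule.disjoint_def.1 hd b hb0 hb
  rw [this, add_zero]
  exact ha

theorem span8_le_s2 : span8 ≤ s2Span 0 := by
  refine Submodule.span_le.2 ?_
  rintro e (rfl | rfl | rfl | rfl | rfl | rfl | rfl | rfl) <;> refine Submodule.subset_span ?_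
  · exact ⟨0, Or.inl rfl⟩
  · exact ⟨-1, Or.inr (Or.inl rfl)⟩
  · exact ⟨0, Or.inr (Or.inr (Or.inl rfl))⟩
  · exact ⟨1, Or.inr (Or.inr (Or.inr (Or.inl rfl)))⟩
  · exact ⟨0, Or.inr (Or.inr (Or.inr (Or.inr (Or.inl rfl))))⟩
  · exact ⟨0, Or.inr (Or.inr (Or.inr (Or.inr (Or.inr (Or.inl rfl)))))⟩
  · exact ⟨-1, Or.inr (Or.inr (Or.inr (Or.inr (Or.inr (Or.inr (Or.inl rfl))))))⟩
  · exact ⟨1, Or.inr (Or.inr (Or.inr (Or.inr (Or.inr (Or.inr (Or.inr rfl))))))⟩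

theorem eig8 : ∀ e ∈ ({Lop 0 0, Eop (-1), Hop 0, Fop 1, hop 0 0, pop 0,
        xop (-1), yop 0 1} : Set (Module.End ℂ GA)), sbrL L0c e = 0 := by
  rintro e (rfl | rfl | rfl | rfl | rfl | rfl | rfl | rfl) <;> rw [sbrL_ap]
  · rw [eig_L]; simp
  · rw [eig_E]; simp
  · rw [eig_H]; simp
  · rw [eig_F]; simp
  · rw [eig_h]; simp
  · rw [eig_p]; simp
  · rw [eig_x]; simp
  · rw [eig_y]; simp

theorem mem_rest {e : Module.End ℂ GA} {k : ℤ} (hs : sbr L0c e = (k : ℂ) • e)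
    (h0 : k = 0 → e ∈ span8) : ∃ k : ℂ, sbrL L0c e = k • e ∧ (k = 0 → e ∈ span8) :=
  ⟨k, hs, fun h => h0 (by exact_mod_cast h)⟩

theorem s2_rest : ∀ e ∈ s2Gen 0, ∃ k : ℂ, sbrL L0c e = k • e ∧ (k = 0 → e ∈ span8) := by
  rintro e ⟨n, rfl | rfl | rfl | rfl | rfl | rfl | rfl | rfl⟩
  · exact mem_rest (eig_L n) fun h => Submodule.subset_span (by subst h; simp)
  · exact mem_rest (eig_E n) fun h => Submodule.subset_span (by
      obtain rfl : n = -1 := by omega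
      simp)
  · exact mem_rest (eig_H n) fun h => Submodule.subset_span (by subst h; simp)
  · exact mem_rest (eig_F n) fun h => Submodule.subset_span (by
      obtain rfl : n = 1 := by omega
      simp)
  · exact mem_rest (eig_h n) fun h => Submodule.subset_span (by subst h; simp)
  · exact mem_rest (eig_p n) fun h => Submodule.subset_span (by subst h; simp)
  · exact mem_rest (eig_x n) fun h => Submodule.subset_span (by
      obtain rfl : n = -1 := by omega
      simp)
  · exact mem_rest (eig_y n) fun h => Submodule.subset_span (by
      obtain rfl : n = 1 := by omega
      simp)

theorem part1 : (span8 : Set (Module.End ℂ GA))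
      = {x : Module.End ℂ GA | x ∈ s2Span 0 ∧ sbr L0c x = 0} := by
  ext x
  constructor
  · intro hx
    refine ⟨span8_le_s2 hx, ?_⟩
    have h : span8 ≤ LinearMap.ker (sbrL L0c) :=
      Submodule.span_le.2 fun e he => LinearMap.mem_ker.2 (eig8 e he)
    exact LinearMap.mem_ker.1 (h hx)
  · rintro ⟨hx, h0⟩
    exact @absEig (Module.End ℂ GA) LinearMap.addCommGroup LinearMap.module (sbrL L0c)
      (s2Gen 0) _ s2_rest eig8 x hx h0

instance : Fintype SB :=
  ⟨{SB.del, SB.lef, SB.car, SB.lam, SB.dif, SB.adj, SB.difc, SB.adjc}, by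
    intro x; cases x <;> simp⟩

theorem sum_SB {M : Type*} [AddCommMonoid M] (f : SB → M) :
    ∑ b, f b = f .del + (f .lef + (f .car + (f .lam + (f .dif + (f .adj + (f .difc + f .adjc)))))) := by
  change ∑ b ∈ ({SB.del, SB.lef, SB.car, SB.lam, SB.dif, SB.adj, SB.difc, SB.adjc} : Finset SB), f b = _
  repeat rw [Finset.sum_insert (by simp)]
  rw [Finset.sum_singleton]

theorem PsiS_eq (x : SB →₀ ℂ) : PsiS x = Finsupp.linearCombination ℂ psiS0 x := rfl

theorem GA_ext' {a b : GA} (h0 : ∀ n, a.1 n = b.1 n) (h1 : ∀ n, a.2.1 n = b.2.1 n)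
    (h2 : ∀ n, a.2.2.1 n = b.2.2.1 n) (h3 : ∀ n, a.2.2.2 n = b.2.2.2 n) : a = b :=
  Prod.ext (Finsupp.ext h0) (Prod.ext (Finsupp.ext h1)
    (Prod.ext (Finsupp.ext h2) (Finsupp.ext h3)))

theorem sigma_ap (x : GA) : sigmaGA x = (x.1, -x.2.1, -x.2.2.1, x.2.2.2) := rfl

theorem act_del (x : GA) : psiS0 .del x = (tshift 1 (tder x.1), tshift 1 (tder x.2.1), tshift 1 (tder x.2.2.1) + x.2.2.1,
      tshift 1 (tder x.2.2.2) + x.2.2.2) := by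
  apply GA_ext' <;> intro n <;>
  simp [psiS0, Lop, Eop, Hop, Fop, hop, pop, xop, yop, Mt, Dt, Mθ1, Mθ2, Dθ1, Dθ2,
    mk4_ap, pr0_ap, pr1_ap, pr2_ap, pr3_ap, tder_ap, tshift_ap] <;> ring_nf

theorem act_lef (x : GA) : psiS0 .lef x = (0, 0, tshift (-1) x.2.1, 0) := by
  apply GA_ext' <;> intro n <;>
  simp [psiS0, Lop, Eop, Hop, Fop, hop, pop, xop, yop, Mt, Dt, Mθ1, Mθ2, Dθ1, Dθ2,
    mk4_ap, pr0_ap, pr1_ap, pr2_ap, pr3_ap, tder_ap, tshift_ap] <;> ring_nf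

theorem act_car (x : GA) : psiS0 .car x = (0, -x.2.1, x.2.2.1, 0) := by
  apply GA_ext' <;> intro n <;>
  simp [psiS0, Lop, Eop, Hop, Fop, hop, pop, xop, yop, Mt, Dt, Mθ1, Mθ2, Dθ1, Dθ2,
    mk4_ap, pr0_ap, pr1_ap, pr2_ap, pr3_ap, tder_ap, tshift_ap] <;> ring_nf

theorem act_lam (x : GA) : psiS0 .lam x = (0, tshift 1 x.2.2.1, 0, 0) := by
  apply GA_ext' <;> intro n <;>
  simp [psiS0, Lop, Eop, Hop, Fop, hop, pop, xop, yop, Mt, Dt, Mθ1, Mθ2, Dθ1, Dθ2,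
    mk4_ap, pr0_ap, pr1_ap, pr2_ap, pr3_ap, tder_ap, tshift_ap] <;> ring_nf

theorem act_dif (x : GA) : psiS0 .dif x = (0, 0, tder x.1, -tder x.2.1) := by
  apply GA_ext' <;> intro n <;>
  simp [psiS0, Lop, Eop, Hop, Fop, hop, pop, xop, yop, Mt, Dt, Mθ1, Mθ2, Dθ1, Dθ2,
    mk4_ap, pr0_ap, pr1_ap, pr2_ap, pr3_ap, tder_ap, tshift_ap] <;> ring_nf

theorem act_adj (x : GA) : psiS0 .adj x = (tshift 1 x.2.2.1, -tshift 1 x.2.2.2, 0, 0) := by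
  apply GA_ext' <;> intro n <;>
  simp [psiS0, Lop, Eop, Hop, Fop, hop, pop, xop, yop, Mt, Dt, Mθ1, Mθ2, Dθ1, Dθ2,
    mk4_ap, pr0_ap, pr1_ap, pr2_ap, pr3_ap, tder_ap, tshift_ap] <;> ring_nf

theorem act_difc (x : GA) : psiS0 .difc x = (x.2.1, 0, x.2.2.2, 0) := by
  apply GA_ext' <;> intro n <;>
  simp [psiS0, Lop, Eop, Hop, Fop, hop, pop, xop, yop, Mt, Dt, Mθ1, Mθ2, Dθ1, Dθ2,
    mk4_ap, pr0_ap, pr1_ap, pr2_ap, pr3_ap, tder_ap, tshift_ap] <;> ring_nf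

theorem act_adjc (x : GA) : psiS0 .adjc x = (0, tshift 1 (tder x.1), 0, tshift 1 (tder x.2.2.1) + x.2.2.1) := by
  apply GA_ext' <;> intro n <;>
  simp [psiS0, Lop, Eop, Hop, Fop, hop, pop, xop, yop, Mt, Dt, Mθ1, Mθ2, Dθ1, Dθ2,
    mk4_ap, pr0_ap, pr1_ap, pr2_ap, pr3_ap, tder_ap, tshift_ap] <;> ring_nf

theorem part2 : Function.Injective PsiS := by
  intro x y hg
  unfold PsiS at hg
  rw [Finsupp.sum_fintype _ _ (by simp), Finsupp.sum_fintype _ _ (by simp), sum_SB, sum_SB] at hg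
  have ht := LinearMap.congr_fun hg ((Finsupp.single 1 1, 0, 0, 0) : GA)
  have h1 := LinearMap.congr_fun hg ((0, Finsupp.single 0 1, 0, 0) : GA)
  have h2 := LinearMap.congr_fun hg ((0, 0, Finsupp.single 0 1, 0) : GA)
  simp only [LinearMap.add_apply, LinearMap.smul_apply, act_del, act_lef, act_car, act_lam, act_dif, act_adj, act_difc, act_adjc] at ht h1 h2
  have a1 := DFunLike.congr_fun (congrArg (fun z : GA => z.1) ht) 1
  have a2 := DFunLike.congr_fun (congrArg (fun z : GA => z.2.2.1) ht) 0
  have a3 := DFunLike.congr_fun (congrArg (fun z : GA => z.2.1) ht) 1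
  have a4 := DFunLike.congr_fun (congrArg (fun z : GA => z.2.2.1) h1) (-1)
  have a5 := DFunLike.congr_fun (congrArg (fun z : GA => z.2.1) h1) 0
  have a6 := DFunLike.congr_fun (congrArg (fun z : GA => z.1) h1) 0
  have a7 := DFunLike.congr_fun (congrArg (fun z : GA => z.2.1) h2) 1
  have a8 := DFunLike.congr_fun (congrArg (fun z : GA => z.1) h2) 1
  simp [tder_ap, tshift_ap] at a1 a2 a3 a4 a5 a6 a7 a8
  ext b
  cases b <;> assumption

set_option maxHeartbeats 4000000 in
theorem psi_hom (b c : SB) : PsiS (brS b c) = sbr (psiS0 b) (psiS0 c) := by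
  rw [PsiS_eq]
  refine LinearMap.ext fun x => ?_
  cases b <;> cases c <;>
  simp only [brS, map_neg, map_smul, map_zero, Finsupp.linearCombination_single, one_smul,
    LinearMap.neg_apply, LinearMap.smul_apply, LinearMap.zero_apply, sbr_ap, sigma_ap, act_del, act_lef, act_car, act_lam, act_dif, act_adj, act_difc, act_adjc] <;>
  apply GA_ext' <;> intro n <;>
  simp [tder_ap, tshift_ap] <;> ring_nf

theorem part3 (x y : SB →₀ ℂ) : PsiS (BrS x y) = sbr (PsiS x) (PsiS y) := by
  rw [← sbrL_ap]
  simp only [PsiS_eq, BrS, Finsupp.sum, map_sum, map_smul]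
  simp only [← PsiS_eq, psi_hom]
  simp only [PsiS, Finsupp.sum, map_sum, map_smul, LinearMap.sum_apply, LinearMap.smul_apply,
    Finset.smul_sum, sbrL_ap, smul_smul]
  rw [Finset.sum_comm]
  simp only [mul_comm]

theorem negMem8 {W : Submodule ℂ (Module.End ℂ GA)} {e : Module.End ℂ GA} (h : e ∈ W) :
    -e ∈ W := by
  have h' := W.smul_mem (-1 : ℂ) h
  have : (-1 : ℂ) • e = -e := by
    refine LinearMap.ext fun v => ?_
    rw [LinearMap.smul_apply, LinearMap.neg_apply]
    apply GA_ext' <;> intro n <;> simp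
  rwa [this] at h'

theorem part4 : Set.range PsiS = (span8 : Set (Module.End ℂ GA)) := by
  have : Set.range PsiS = (LinearMap.range (Finsupp.linearCombination ℂ psiS0) :
    Set (Module.End ℂ GA)) := rfl
  rw [this, Finsupp.range_linearCombination]
  congr 1
  apply le_antisymm
  · refine Submodule.span_le.2 ?_
    have hm : ∀ e ∈ ({Lop 0 0, Eop (-1), Hop 0, Fop 1, hop 0 0, pop 0,
        xop (-1), yop 0 1} : Set (Module.End ℂ GA)), e ∈ span8 :=
      fun e he => Submodule.subset_span he
    rintro _ ⟨b, rfl⟩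
    cases b
    · exact add_mem (negMem8 (hm _ (by simp))) (Submodule.smul_mem _ _ (hm _ (by simp)))
    · exact hm _ (by simp [psiS0])
    · exact hm _ (by simp [psiS0])
    · exact hm _ (by simp [psiS0])
    · exact hm _ (by simp [psiS0])
    · exact negMem8 (hm _ (by simp))
    · exact hm _ (by simp [psiS0])
    · exact hm _ (by simp [psiS0])
  · refine Submodule.span_le.2 ?_
    have hm : ∀ b, psiS0 b ∈ Submodule.span ℂ (Set.range psiS0) :=
      fun b => Submodule.subset_span ⟨b, rfl⟩
    rintro e (rfl | rfl | rfl | rfl | rfl | rfl | rfl | rfl)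
    · have h := add_mem (Submodule.smul_mem _ ((1 : ℂ) / 2) (hm .car)) (negMem8 (hm .del))
      have e : ((1 : ℂ) / 2) • psiS0 .car + -psiS0 .del = Lop 0 0 := by
        simp only [psiS0]; abel
      rwa [e] at h
    · exact hm .lef
    · exact hm .car
    · exact hm .lam
    · exact hm .dif
    · have h := negMem8 (hm .adj)
      have e : - psiS0 .adj = pop 0 := LinearMap.ext fun v => neg_neg (pop 0 v)
      rwa [e] at h
    · exact hm .difc
    · exact hm .adjc

/-- The degree-zero part of `S'(2,0)` with respect to the grading
`deg` (the eigenvalue grading of `ad(−ℒ₀ + (1/2)H₀)`) is spanned by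
`ℒ₀, E₋₁, H₀, F₁, 𝔥₀, 𝔭₀, 𝔵₋₁, 𝔶₁`, and `ψ` is an isomorphism of Lie superalgebras
from the algebra `𝒮` of classical Kähler operators onto `S'(2,0)_{deg=0}`. -/
theorem classical_kahler_operators_iso_degree_zero_part :
    -- the degree-zero part of `S'(2,0)` is spanned by the eight listed elements
    (Submodule.span ℂ ({Lop 0 0, Eop (-1), Hop 0, Fop 1, hop 0 0, pop 0,
        xop (-1), yop 0 1} : Set (Module.End ℂ GA)) : Set (Module.End ℂ GA))
      = {x : Module.End ℂ GA | x ∈ s2Span 0 ∧ sbr L0c x = 0} ∧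
    -- `ψ` is injective,
    Function.Injective PsiS ∧
    -- a homomorphism of Lie superalgebras,
    (∀ x y : SB →₀ ℂ, PsiS (BrS x y) = sbr (PsiS x) (PsiS y)) ∧
    -- and surjective onto the degree-zero part
    Set.range PsiS = (Submodule.span ℂ ({Lop 0 0, Eop (-1), Hop 0, Fop 1, hop 0 0,
        pop 0, xop (-1), yop 0 1} : Set (Module.End ℂ GA)) : Submodule ℂ (Module.End ℂ GA)) := by
  exact ⟨part1, part2, part3, part4⟩
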